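/- arXiv:0805.2572 — 6 statements merged into one kernel-verified Lean document; each statement's English description precedes it below -/
import Mathlib

section
/- Let p be a prime and let k'/k be a finite Galois extension of perfect fields of characteristic p. Then the fraction field FractionRing(𝕎 k') of the p-typical Witt vectors of k' is a Galois field extension of FractionRing(𝕎 k) of degree [k' : k], and the map sending g ∈ Gal(k'/k) to the automorphism of FractionRing(𝕎 k') induced by Witt-vector functoriality from g is a group isomorphism from Gal(k'/k) onto the group of FractionRing(𝕎 k)-algebra automorphisms of FractionRing(𝕎 k'). -/
namespace WittVector

variable {p : ℕ} [Fact p.Prime]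

/-- The algebra structure on `𝕎 S` over `𝕎 R` induced by functoriality from an `R`-algebra `S`. -/
noncomputable abbrev algebraOfAlgebra (R S : Type*) [CommRing R] [CommRing S] [Algebra R S] :
    Algebra (WittVector p R) (WittVector p S) :=
  (map (algebraMap R S)).toAlgebra

/-- The coefficientwise action on `𝕎 S` induced by functoriality from an action on `S` by ring
homomorphisms. -/
noncomputable abbrev mulSemiringAction (G S : Type*) [Monoid G] [CommRing S]
    [MulSemiringAction G S] : MulSemiringAction G (WittVector p S) where
  smul g x := map (MulSemiringAction.toRingHom G S g) x
  one_smul x := by ext n; exact one_smul G (x.coeff n)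
  mul_smul g h x := by ext n; exact mul_smul g h (x.coeff n)
  smul_zero g := map_zero (map (MulSemiringAction.toRingHom G S g))
  smul_add g := map_add (map (MulSemiringAction.toRingHom G S g))
  smul_one g := map_one (map (MulSemiringAction.toRingHom G S g))
  smul_mul g := map_mul (map (MulSemiringAction.toRingHom G S g))

attribute [local instance] algebraOfAlgebra mulSemiringAction

theorem coeff_smul_of_mulSemiringAction {G S : Type*} [Monoid G] [CommRing S]
    [MulSemiringAction G S] (g : G) (x : WittVector p S) (n : ℕ) :
    (g • x).coeff n = g • x.coeff n :=
  rfl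

theorem coeff_algebraMap_of_algebra {R S : Type*} [CommRing R] [CommRing S] [Algebra R S]
    (x : WittVector p R) (n : ℕ) :
    (algebraMap (WittVector p R) (WittVector p S) x).coeff n = algebraMap R S (x.coeff n) :=
  rfl

/-- A Galois group for `S/R` is a Galois group for `𝕎 S/𝕎 R`. -/
theorem isGaloisGroup (G R S : Type*) [Group G] [CommRing R] [CommRing S] [Algebra R S]
    [MulSemiringAction G S] [hG : IsGaloisGroup G R S] :
    IsGaloisGroup G (WittVector p R) (WittVector p S) where
  faithful := by
    have := hG.faithful
    refine ⟨fun {g h} hgh ↦ eq_of_smul_eq_smul fun s : S ↦ ?_⟩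
    simpa [coeff_smul_of_mulSemiringAction, teichmuller_coeff_zero] using
      congrArg (fun x ↦ x.coeff 0) (hgh (teichmuller p s))
  commutes := by
    refine ⟨fun g a b ↦ ?_⟩
    have ha : g • algebraMap (WittVector p R) (WittVector p S) a = algebraMap _ _ a := by
      ext n
      simp [coeff_smul_of_mulSemiringAction, coeff_algebraMap_of_algebra]
    rw [Algebra.smul_def, Algebra.smul_def, smul_mul', ha]
  isInvariant := by
    refine ⟨fun x hx ↦ ?_⟩
    have hcoeff (n : ℕ) : ∃ a, algebraMap R S a = x.coeff n :=
      hG.isInvariant.isInvariant _ fun g ↦ congrArg (fun y ↦ y.coeff n) (hx g)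
    choose a ha using hcoeff
    exact ⟨mk p a, ext fun n ↦ ha n⟩

end WittVector

section

variable (p : ℕ) [Fact p.Prime] (k k' : Type*) [Field k] [Field k']
  [CharP k p] [CharP k' p] [PerfectRing k p] [PerfectRing k' p] [Algebra k k']

/-- The algebra structure on `FractionRing (𝕎 k')` over `FractionRing (𝕎 k)` induced,
by Witt-vector functoriality, from the embedding `k → k'`. -/
noncomputable instance wittFractionRingAlgebra :
    Algebra (FractionRing (WittVector p k)) (FractionRing (WittVector p k')) :=
  (IsFractionRing.lift
    (g := (algebraMap (WittVector p k') (FractionRing (WittVector p k'))).comp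
      (WittVector.map (algebraMap k k')))
    (by
      rw [RingHom.coe_comp]
      exact (IsFractionRing.injective (WittVector p k')
        (FractionRing (WittVector p k'))).comp
        (WittVector.map_injective _ (algebraMap k k').injective))).toAlgebra

/-- For a finite Galois extension `k'/k` of perfect fields of characteristic `p`, the
fraction field of `𝕎 k'` is Galois over the fraction field of `𝕎 k`, of degree
`[k' : k]`, and `g ↦ (automorphism induced by Witt-vector functoriality from g)` is a
group isomorphism `Gal(k'/k) ≃* Gal(FractionRing (𝕎 k') / FractionRing (𝕎 k))`. -/
theorem wittFractionRing_isGalois_of_isGalois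
    [IsGalois k k'] [FiniteDimensional k k'] :
    IsGalois (FractionRing (WittVector p k)) (FractionRing (WittVector p k')) ∧
      Module.finrank (FractionRing (WittVector p k)) (FractionRing (WittVector p k'))
        = Module.finrank k k' ∧
      ∃ e : (k' ≃ₐ[k] k') ≃*
          (FractionRing (WittVector p k') ≃ₐ[FractionRing (WittVector p k)]
            FractionRing (WittVector p k')),
        ∀ (g : k' ≃ₐ[k] k') (x : WittVector p k'),
          e g (algebraMap (WittVector p k') (FractionRing (WittVector p k')) x)
            = algebraMap (WittVector p k') (FractionRing (WittVector p k'))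
                (WittVector.map (g : k' →+* k') x) := by
  let := WittVector.algebraOfAlgebra (p := p) k k'
  let := WittVector.mulSemiringAction (p := p) (k' ≃ₐ[k] k') k'
  let := IsFractionRing.mulSemiringAction (k' ≃ₐ[k] k') (WittVector p k')
    (FractionRing (WittVector p k'))
  have : IsGaloisGroup (k' ≃ₐ[k] k') (WittVector p k) (WittVector p k') :=
    WittVector.isGaloisGroup _ k k'
  have : IsScalarTower (WittVector p k) (FractionRing (WittVector p k))
      (FractionRing (WittVector p k')) :=
    .of_algebraMap_eq fun x ↦ (IsFractionRing.lift_algebraMap _ x).symm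
  have : IsGaloisGroup (k' ≃ₐ[k] k') (FractionRing (WittVector p k))
      (FractionRing (WittVector p k')) :=
    IsGaloisGroup.toFractionRing _ (WittVector p k) (WittVector p k')
  have : FaithfulSMul (FractionRing (WittVector p k)) (FractionRing (WittVector p k')) :=
    (faithfulSMul_iff_algebraMap_injective _ _).mpr (RingHom.injective (algebraMap
      (FractionRing (WittVector p k)) (FractionRing (WittVector p k'))))
  refine ⟨IsGaloisGroup.isGalois (k' ≃ₐ[k] k') _ _, ?_,
    IsGaloisGroup.mulEquivAlgEquiv (k' ≃ₐ[k] k') _ _, fun g x ↦ ?_⟩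
  · rw [← IsGaloisGroup.card_eq_finrank (k' ≃ₐ[k] k'), IsGalois.card_aut_eq_finrank]
  · exact (algebraMap.smul' g x (FractionRing (WittVector p k'))).symm

end
end

section
/- Let p be a prime and k an algebraically closed field of characteristic p. Then the map 𝕎 k → 𝕎 k sending x to frobenius(x) − x is surjective, where frobenius denotes the Witt vector Frobenius endomorphism of 𝕎 k. -/
/-- In a ring which is complete for the `a`-adic topology, an additive endomorphism commuting with
multiplication by `a` and surjective modulo `a` is surjective. -/
theorem AddMonoidHom.surjective_of_surjective_mod_span_singleton {R : Type*} [CommRing R] (a : R)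
    [IsAdicComplete (Ideal.span {a}) R] (f : R →+ R) (hfa : ∀ x, f (a * x) = a * f x)
    (hf : ∀ y, ∃ x z, y = f x + a * z) : Function.Surjective f := by
  intro y
  have hf_pow (n : ℕ) (x : R) : f (a ^ n * x) = a ^ n * f x := by
    induction n with
    | zero => simp
    | succ n ih => rw [pow_succ', mul_assoc, hfa, ih, mul_assoc]
  choose g h hgh using hf
  let z : ℕ → R := fun n => h^[n] y
  let s : ℕ → R := fun n => ∑ i ∈ Finset.range n, a ^ i * g (z i)
  have hs (n : ℕ) : f (s n) + a ^ n * z n = y := by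
    induction n with
    | zero => simp [s, z]
    | succ n ih =>
      have hz : z (n + 1) = h (z n) := Function.iterate_succ_apply' h n y
      have hs_succ : s (n + 1) = s n + a ^ n * g (z n) := Finset.sum_range_succ _ n
      rw [hs_succ, map_add, hf_pow, hz]
      linear_combination ih - a ^ n * hgh (z n)
  have hcauchy {m n : ℕ} (hmn : m ≤ n) :
      s m ≡ s n [SMOD (Ideal.span {a} ^ m • ⊤ : Submodule R R)] := by
    rw [SModEq.comm, SModEq.sub_mem, smul_eq_mul, Ideal.mul_top, Ideal.span_singleton_pow,
      Ideal.mem_span_singleton, ← Finset.sum_Ico_eq_sub _ hmn]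
    exact Finset.dvd_sum fun i hi =>
      (pow_dvd_pow a (Finset.mem_Ico.mp hi).1).mul_right _
  obtain ⟨x, hx⟩ := IsPrecomplete.prec' (I := Ideal.span {a}) s hcauchy
  refine ⟨x, sub_eq_zero.mp (IsHausdorff.haus' (I := Ideal.span {a}) _ fun n => ?_)⟩
  have hxn := hx n
  rw [SModEq.sub_mem, smul_eq_mul, Ideal.mul_top, Ideal.span_singleton_pow,
    Ideal.mem_span_singleton] at hxn
  rw [SModEq.zero, smul_eq_mul, Ideal.mul_top, Ideal.span_singleton_pow,
    Ideal.mem_span_singleton]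
  obtain ⟨c, hc⟩ := hxn
  have hfc : f (s n) - f x = a ^ n * f c := by rw [← map_sub, hc, hf_pow]
  exact ⟨-f c - z n, by linear_combination -hfc + hs n⟩

/-- The Artin–Schreier map `x ↦ x ^ p - x` is surjective on an algebraically closed field. -/
theorem IsAlgClosed.exists_pow_sub_self_eq {k : Type*} [Field k] [IsAlgClosed k] {p : ℕ}
    (hp : 1 < p) (c : k) : ∃ x : k, x ^ p - x = c := by
  open Polynomial in
  have hdeg : (X ^ p - (X + C c) : k[X]).degree = p := by
    rw [degree_sub_eq_left_of_degree_lt] <;> rw [degree_X_pow]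
    rw [degree_X_add_C]
    exact_mod_cast hp
  obtain ⟨x, hx⟩ := IsAlgClosed.exists_root _ (by rw [hdeg]; exact_mod_cast (by omega : p ≠ 0))
  refine ⟨x, ?_⟩
  simp only [Polynomial.IsRoot.def, Polynomial.eval_sub, Polynomial.eval_pow, Polynomial.eval_X,
    Polynomial.eval_add, Polynomial.eval_C] at hx
  linear_combination hx

/-- **Artin–Schreier–Witt surjectivity.** For a prime `p` and an algebraically closed
field `k` of characteristic `p`, the map `x ↦ frobenius x - x` on the ring `𝕎 k` of
`p`-typical Witt vectors is surjective. -/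
theorem wittVector_frobenius_sub_id_surjective
    (p : ℕ) [Fact p.Prime] (k : Type*) [Field k] [CharP k p] [IsAlgClosed k] :
    Function.Surjective (fun x : WittVector p k => WittVector.frobenius x - x) := by
  refine AddMonoidHom.surjective_of_surjective_mod_span_singleton (p : WittVector p k)
    ((WittVector.frobenius : WittVector p k →+* WittVector p k).toAddMonoidHom -
      AddMonoidHom.id _) (fun x => ?_) fun y => ?_
  · simp [mul_sub]
  · obtain ⟨c, hc⟩ := IsAlgClosed.exists_pow_sub_self_eq (Fact.out : p.Prime).one_lt (y.coeff 0)
    let x : WittVector p k := WittVector.teichmuller p c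
    have hx : y - (WittVector.frobenius x - x) ∈ Ideal.span {(p : WittVector p k)} := by
      rw [← WittVector.ker_constantCoeff, RingHom.mem_ker, map_sub, map_sub]
      simp [WittVector.constantCoeff_apply, WittVector.coeff_frobenius_charP, x, hc]
    obtain ⟨z, hz⟩ := Ideal.mem_span_singleton.mp hx
    exact ⟨x, z, by simpa [sub_eq_iff_eq_add'] using hz⟩
end

section
/- Let p be a prime, k an algebraically closed field of characteristic p, F = FractionRing(𝕎 k) the fraction field of the p-typical Witt vectors of k, and σ : F ≃+* F the automorphism induced by the Witt vector Frobenius. Let E be a finite-dimensional F-vector space and Φ : E → E an additive bijection satisfying Φ(c • v) = σ(c) • Φ(v) for all c ∈ F, v ∈ E. Suppose D ⊆ E is an F-subspace with Φ(D) ⊆ D such that the quotient E/D is one-dimensional and the map induced by Φ on E/D fixes some nonzero vector. Then there exists e ∈ E with Φ(e) = e and e ∉ D. -/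
open WittVector

/-- An additive endomorphism of a `ϖ`-adically complete ring that commutes with multiplication by
`ϖ` and is surjective modulo `ϖ` is surjective. -/
theorem IsAdicComplete.surjective_of_surjective_mod {R : Type*} [CommRing R] (ϖ : R)
    [IsAdicComplete (Ideal.span {ϖ}) R] (L : R →+ R) (hL : ∀ x, L (ϖ * x) = ϖ * L x)
    (hmod : ∀ t, ∃ y, ϖ ∣ t - L y) : Function.Surjective L := by
  intro t
  have hLpow : ∀ (n : ℕ) (x : R), L (ϖ ^ n * x) = ϖ ^ n * L x := by
    intro n
    induction n with
    | zero => simp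
    | succ n ih => intro x; rw [pow_succ, mul_assoc, ih, hL, mul_assoc]
  choose y r hr using hmod
  let y' : ℕ → R := fun n => ∑ i ∈ Finset.range n, ϖ ^ i * y (r^[i] t)
  have hrem : ∀ n, t - L (y' n) = ϖ ^ n * r^[n] t := by
    intro n
    induction n with
    | zero => simp [y']
    | succ n ih =>
      have h := hr (r^[n] t)
      have hy' : y' (n + 1) = y' n + ϖ ^ n * y (r^[n] t) := Finset.sum_range_succ _ _
      rw [hy', map_add, hLpow, Function.iterate_succ_apply']
      linear_combination ih + ϖ ^ n * h
  have hmem : ∀ (n : ℕ) (a b : R),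
      a ≡ b [SMOD (Ideal.span {ϖ} ^ n • ⊤ : Submodule R R)] ↔ ϖ ^ n ∣ a - b := by
    intro n a b
    rw [SModEq.sub_mem, smul_eq_mul, Ideal.mul_top, Ideal.span_singleton_pow,
      Ideal.mem_span_singleton]
  obtain ⟨z, hz⟩ := IsPrecomplete.prec (I := Ideal.span {ϖ}) inferInstance (f := y') (by
    intro m n hmn
    refine ((hmem _ _ _).2 ?_).symm
    simp only [y']
    rw [← Finset.sum_range_add_sum_Ico _ hmn, add_sub_cancel_left]
    exact Finset.dvd_sum fun i hi =>
      (pow_dvd_pow ϖ (Finset.mem_Ico.1 hi).1).mul_right _)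
  refine ⟨z, ?_⟩
  rw [← sub_eq_zero]
  refine IsHausdorff.haus (I := Ideal.span {ϖ}) inferInstance _ fun n => ?_
  rw [hmem, sub_zero]
  obtain ⟨u, hu⟩ := (hmem _ _ _).1 (hz n)
  have h : L (y' n) - L z = ϖ ^ n * L u := by rw [← map_sub, hu, hLpow]
  exact ⟨-(L u + r^[n] t), by linear_combination -h - hrem n⟩

/-- Over an algebraically closed field, a polynomial `∑ a i * X ^ p ^ i` with a nonzero coefficient
takes every value. -/
theorem IsAlgClosed.exists_sum_mul_pow_pow_eq {k : Type*} [Field k] [IsAlgClosed k] {p : ℕ}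
    (hp : 1 < p) (n : ℕ) (a : ℕ → k) {j : ℕ} (hj : j < n) (ha : a j ≠ 0) (t : k) :
    ∃ y : k, ∑ i ∈ Finset.range n, a i * y ^ p ^ i = t := by
  open Polynomial in
  let P : k[X] := ∑ i ∈ Finset.range n, C (a i) * X ^ p ^ i - C t
  have hcoeff : P.coeff (p ^ j) = a j := by
    have hinj : ∀ i, p ^ j = p ^ i ↔ j = i := fun i => Nat.pow_right_inj hp
    have hne : p ^ j ≠ 0 := by positivity
    simp only [P, Polynomial.coeff_sub, Polynomial.finsetSum_coeff, Polynomial.coeff_C_mul,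
      Polynomial.coeff_X_pow, Polynomial.coeff_C, hinj, hne]
    simp [hj]
  have hdeg : P.degree ≠ 0 := by
    intro h
    have hlt : P.degree < (p ^ j : ℕ) := by
      rw [h]; exact_mod_cast (by positivity : 0 < p ^ j)
    exact ha (hcoeff ▸ Polynomial.coeff_eq_zero_of_degree_lt hlt)
  obtain ⟨y, hy⟩ := IsAlgClosed.exists_root P hdeg
  refine ⟨y, sub_eq_zero.1 ?_⟩
  simpa [P, Polynomial.eval_finsetSum] using hy

namespace WittVector

variable {p : ℕ} [Fact p.Prime] {k : Type*} [Field k] [CharP k p] [IsAlgClosed k]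

/-- A Frobenius-twisted polynomial over `𝕎 k` that is nonzero modulo `p` acts surjectively
on `𝕎 k`. -/
theorem exists_sum_mul_iterate_frobenius_eq (n : ℕ) (a : ℕ → WittVector p k) {j : ℕ} (hj : j < n)
    (ha : (a j).coeff 0 ≠ 0) (t : WittVector p k) :
    ∃ y, ∑ i ∈ Finset.range n, a i * frobenius^[i] y = t := by
  let L : WittVector p k →+ WittVector p k :=
    { toFun := fun y => ∑ i ∈ Finset.range n, a i * frobenius^[i] y
      map_zero' := by simp [iterate_map_zero]
      map_add' := fun x y => by simp [iterate_map_add, mul_add, Finset.sum_add_distrib] }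
  have hL : ∀ y, L y = ∑ i ∈ Finset.range n, a i * frobenius^[i] y := fun _ => rfl
  have hfix : ∀ i : ℕ, frobenius^[i] (p : WittVector p k) = p := fun i =>
    Function.iterate_fixed (map_natCast _ _) i
  refine IsAdicComplete.surjective_of_surjective_mod (p : WittVector p k) L (fun x => ?_)
    (fun s => ?_) t
  · simp only [hL, iterate_map_mul, hfix, Finset.mul_sum]
    exact Finset.sum_congr rfl fun i _ => by ring
  · obtain ⟨y, hy⟩ := IsAlgClosed.exists_sum_mul_pow_pow_eq (Fact.out : p.Prime).one_lt n
      (fun i => (a i).coeff 0) hj ha (s.coeff 0)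
    refine ⟨teichmuller p y, ?_⟩
    rw [← Ideal.mem_span_singleton, mem_span_p_iff_coeff_zero_eq_zero, hL]
    rw [← constantCoeff_apply, map_sub, map_sum, sub_eq_zero]
    simp only [map_mul, constantCoeff_apply, iterate_frobenius_coeff, teichmuller_coeff_zero, hy]

theorem FractionRing.iterate_frobenius_algebraMap (i : ℕ) (x : WittVector p k) :
    (FractionRing.frobenius p k)^[i] (algebraMap _ _ x) =
      algebraMap (WittVector p k) (FractionRing (WittVector p k))
        (WittVector.frobenius^[i] x) := by
  induction i generalizing x with
  | zero => rfl
  | succ i ih =>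
    rw [Function.iterate_succ_apply, Function.iterate_succ_apply, ← ih]
    congr 1
    exact IsFractionRing.ringEquivOfRingEquiv_algebraMap _ _

/-- Every element of the fraction field of `𝕎 k` becomes integral after multiplication by a power
of `p`. -/
theorem FractionRing.exists_pow_p_mul_eq_algebraMap (x : FractionRing (WittVector p k)) :
    ∃ (m : ℕ) (s : WittVector p k), (p : FractionRing (WittVector p k)) ^ m * x =
      algebraMap (WittVector p k) _ s := by
  obtain ⟨r, q, hq, rfl⟩ := IsFractionRing.div_surjective (A := WittVector p k) x
  obtain ⟨m, u, rfl⟩ := exists_eq_pow_p_mul' q (nonZeroDivisors.ne_zero hq)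
  refine ⟨m, r * ↑u⁻¹, ?_⟩
  have hp := FractionRing.p_nonzero p k
  have hu : algebraMap (WittVector p k) (FractionRing (WittVector p k)) u *
      algebraMap (WittVector p k) (FractionRing (WittVector p k)) ↑u⁻¹ = 1 := by
    rw [← map_mul, Units.mul_inv, map_one]
  have hu0 := left_ne_zero_of_mul_eq_one hu
  rw [map_mul, map_mul, map_pow, map_natCast]
  field_simp
  linear_combination -(algebraMap (WittVector p k) (FractionRing (WittVector p k)) r) * hu

/-- A nonzero Frobenius-twisted polynomial over the fraction field of `𝕎 k` acts surjectively. -/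
theorem FractionRing.exists_sum_mul_iterate_frobenius_eq (n : ℕ)
    (c : ℕ → FractionRing (WittVector p k)) {j : ℕ} (hj : j < n) (hc : c j ≠ 0)
    (t : FractionRing (WittVector p k)) :
    ∃ y, ∑ i ∈ Finset.range n, c i * (FractionRing.frobenius p k)^[i] y = t := by
  obtain ⟨l, hl, hmax⟩ := Finset.exists_max_image (Finset.range n)
    (fun i => ValuationRing.valuation (WittVector p k) (FractionRing (WittVector p k)) (c i))
    ⟨j, Finset.mem_range.2 hj⟩
  have hcl : c l ≠ 0 := by
    intro h
    have := hmax j (Finset.mem_range.2 hj)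
    rw [h, map_zero, le_zero_iff, map_eq_zero] at this
    exact hc this
  have hint : ∀ i, ∃ b : WittVector p k, i ∈ Finset.range n →
      algebraMap _ (FractionRing (WittVector p k)) b = c i / c l := by
    intro i
    by_cases hi : i ∈ Finset.range n
    · obtain ⟨b, hb⟩ := (ValuationRing.mem_integer_iff (WittVector p k)
        (FractionRing (WittVector p k)) (c i / c l)).1 (by
          rw [Valuation.mem_integer_iff, map_div₀]
          exact div_le_one_of_le₀ (hmax i hi) zero_le)
      exact ⟨b, fun _ => hb⟩
    · exact ⟨0, fun h => absurd h hi⟩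
  choose b hb using hint
  have hbl : b l = 1 := by
    apply IsFractionRing.injective (WittVector p k) (FractionRing (WittVector p k))
    rw [hb l hl, div_self hcl, map_one]
  obtain ⟨m, s, hs⟩ := FractionRing.exists_pow_p_mul_eq_algebraMap (t / c l)
  obtain ⟨y, hy⟩ := WittVector.exists_sum_mul_iterate_frobenius_eq n b (Finset.mem_range.1 hl)
    (by simp [hbl]) s
  have hp : (p : FractionRing (WittVector p k)) ^ m ≠ 0 :=
    pow_ne_zero _ (FractionRing.p_nonzero p k)
  have hfix : ∀ i : ℕ, (FractionRing.frobenius p k)^[i]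
      ((p : FractionRing (WittVector p k)) ^ m) = (p : FractionRing (WittVector p k)) ^ m :=
    fun i => Function.iterate_fixed (by rw [map_pow, map_natCast]) i
  refine ⟨algebraMap _ _ y / (p : FractionRing (WittVector p k)) ^ m, ?_⟩
  have hterm : ∀ i ∈ Finset.range n, c i * (FractionRing.frobenius p k)^[i]
      (algebraMap _ _ y / (p : FractionRing (WittVector p k)) ^ m) =
      c l / (p : FractionRing (WittVector p k)) ^ m *
        algebraMap _ _ (b i * WittVector.frobenius^[i] y) := by
    intro i hi
    have hdiv : (FractionRing.frobenius p k)^[i]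
        (algebraMap _ _ y / (p : FractionRing (WittVector p k)) ^ m) =
        algebraMap _ _ (WittVector.frobenius^[i] y) /
          (p : FractionRing (WittVector p k)) ^ m := by
      rw [eq_div_iff hp]
      conv_lhs => rw [← hfix i]
      rw [← iterate_map_mul, hfix, div_mul_cancel₀ _ hp, FractionRing.iterate_frobenius_algebraMap]
    rw [hdiv, map_mul, hb i hi]
    field_simp
  rw [Finset.sum_congr rfl hterm, ← Finset.mul_sum, ← map_sum, hy, ← hs]
  field_simp

end WittVector

/-- Let `Φ` be a `σ`-semilinear endomorphism of a vector space such that nonzero `σ`-twisted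
polynomials act surjectively on scalars. If the iterates of `w` under `Φ` satisfy a nontrivial
linear relation, then `Φ v - v = w` is solvable in any `Φ`-stable subspace containing `w`. -/
theorem exists_semilinear_sub_self_eq {F E : Type*} [Field F] [AddCommGroup E] [Module F E]
    (σ : F ≃+* F)
    (hσ : ∀ (n : ℕ) (c : ℕ → F) (j : ℕ), j < n → c j ≠ 0 → ∀ t : F,
      ∃ y, ∑ i ∈ Finset.range n, c i * σ^[i] y = t)
    (Φ : E →+ E) (hΦ : ∀ (c : F) (v : E), Φ (c • v) = σ c • Φ v)
    (D : Submodule F E) (hD : ∀ v ∈ D, Φ v ∈ D) {w : E} (hw : w ∈ D)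
    (n : ℕ) (c : ℕ → F) {j : ℕ} (hj : j < n + 1) (hc : c j ≠ 0)
    (hrel : ∑ i ∈ Finset.range (n + 1), c i • Φ^[i] w = 0) :
    ∃ v ∈ D, Φ v - v = w := by
  have hσ0 : ∀ i, σ^[i] (c j) ≠ 0 := fun i h =>
    hc ((σ.injective.iterate i) (by rw [h, iterate_map_zero]))
  obtain ⟨y, hy⟩ := hσ (n + 1) (fun i => σ^[i] (c (n - i))) (n - j) (by omega)
    (by rw [Nat.sub_sub_self (by omega)]; exact hσ0 _) (-1)
  -- The coefficients of the solution, determined recursively by `Φ v - v = w`.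
  let x : ℕ → F := fun m => -1 - ∑ i ∈ Finset.range (m + 1), σ^[i] (c (m - i) * y)
  have hx0 : x 0 = -1 - c 0 * y := by simp [x]
  have hxs : ∀ m, σ (x m) = x (m + 1) + c (m + 1) * y := by
    intro m
    simp only [x]
    rw [Finset.sum_range_succ' _ (m + 1)]
    simp [Function.iterate_succ_apply']
    abel
  have hxn : x n = 0 := by
    simp only [x, iterate_map_mul, hy, sub_self]
  refine ⟨∑ i ∈ Finset.range (n + 1), x i • Φ^[i] w, D.sum_mem fun i _ => D.smul_mem _ ?_, ?_⟩
  · exact Set.MapsTo.iterate (s := (D : Set E)) hD i hw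
  have hΦv : Φ (∑ i ∈ Finset.range (n + 1), x i • Φ^[i] w) =
      ∑ i ∈ Finset.range n, (x (i + 1) • Φ^[i + 1] w + y • c (i + 1) • Φ^[i + 1] w) := by
    rw [map_sum, Finset.sum_range_succ, hxn, zero_smul, map_zero, add_zero]
    refine Finset.sum_congr rfl fun i _ => ?_
    rw [hΦ, hxs, Function.iterate_succ_apply', smul_smul, ← add_smul, mul_comm y]
  rw [Finset.sum_range_succ', ← eq_neg_iff_add_eq_zero] at hrel
  rw [hΦv, Finset.sum_add_distrib, ← Finset.smul_sum, hrel, Finset.sum_range_succ', hx0]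
  simp only [Function.iterate_zero, id]
  module

/-- Every extension of the unit `φ`-module splits: if `k` is algebraically closed of
characteristic `p`, `F = FractionRing (𝕎 k)`, `σ` the automorphism of `F` induced by the
Witt vector Frobenius, `E` a finite-dimensional `F`-vector space with an additive bijection
`Φ` satisfying `Φ (c • v) = σ c • Φ v`, and `D ⊆ E` a `Φ`-stable subspace with
one-dimensional quotient on which the induced map fixes a nonzero vector, then there is a
`Φ`-fixed vector of `E` outside `D`. -/
theorem phi_module_extension_of_unit_splits
    (p : ℕ) [Fact p.Prime] (k : Type*) [Field k] [CharP k p] [IsAlgClosed k]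
    (σ : FractionRing (WittVector p k) ≃+* FractionRing (WittVector p k))
    (hσ : σ = WittVector.FractionRing.frobenius p k)
    (E : Type*) [AddCommGroup E] [Module (FractionRing (WittVector p k)) E]
    [FiniteDimensional (FractionRing (WittVector p k)) E]
    (Φ : E ≃+ E)
    (hΦ : ∀ (c : FractionRing (WittVector p k)) (v : E), Φ (c • v) = σ c • Φ v)
    (D : Submodule (FractionRing (WittVector p k)) E)
    (hD : ∀ v ∈ D, Φ v ∈ D)
    (hquot : Module.finrank (FractionRing (WittVector p k)) (E ⧸ D) = 1)
    (hfix : ∃ v : E, v ∉ D ∧ Φ v - v ∈ D) :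
    ∃ e : E, Φ e = e ∧ e ∉ D := by
  subst hσ
  obtain ⟨v₀, hv₀, hw⟩ := hfix
  let n := Module.finrank (FractionRing (WittVector p k)) E
  have hdep : ¬ LinearIndependent (FractionRing (WittVector p k))
      (fun i : Fin (n + 1) => Φ^[i] (Φ v₀ - v₀)) := fun h => by
    have := h.fintype_card_le_finrank
    simp [n] at this
  obtain ⟨g, hg, j, hj⟩ := Fintype.not_linearIndependent_iff.1 hdep
  obtain ⟨v, hv, hΦv⟩ := exists_semilinear_sub_self_eq (FractionRing.frobenius p k)
    (fun n c j hj hc t => FractionRing.exists_sum_mul_iterate_frobenius_eq n c hj hc t)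
    Φ.toAddMonoidHom hΦ D hD hw n (fun i => if h : i < n + 1 then g ⟨i, h⟩ else 0) j.2
    (by simpa only [Fin.is_lt, dif_pos] using hj)
    (by rw [Finset.sum_range]; simp only [Fin.is_lt, dif_pos]; exact hg)
  refine ⟨v₀ - v, ?_, fun h => hv₀ ((D.sub_mem_iff_left hv).1 h)⟩
  have hΦv' : Φ v - v = Φ v₀ - v₀ := hΦv
  rw [map_sub, ← sub_eq_zero]
  rw [← sub_eq_zero] at hΦv'
  rw [← neg_eq_zero, ← hΦv']
  abel
end

section
/- Let p be a prime, k a perfect field of characteristic p, F = FractionRing(𝕎 k), and σ : F ≃+* F the automorphism induced by the Witt vector Frobenius. Then for every nonzero integer m, the only element c ∈ F satisfying p^m • σ(c) = c is c = 0. -/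
open WittVector

/-- A nontrivial integral power of a non-unit is not a unit of the base ring. -/
theorem IsFractionRing.eq_zero_of_zpow_eq_algebraMap_units
    {R K : Type*} [CommRing R] [IsDomain R] [Field K] [Algebra R K]
    [IsFractionRing R K] {ϖ : R} (hϖ : ¬ IsUnit ϖ) {m : ℤ} {u : Rˣ}
    (h : algebraMap R K ϖ ^ m = algebraMap R K u) : m = 0 := by
  have key : ∀ (n : ℕ) (v : Rˣ), algebraMap R K ϖ ^ n = algebraMap R K v → n = 0 := by
    intro n v hn
    rw [← map_pow] at hn
    have hunit : IsUnit (ϖ ^ n) := IsFractionRing.injective R K hn ▸ v.isUnit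
    by_contra h0
    exact hϖ ((isUnit_pow_iff h0).mp hunit)
  obtain ⟨n, rfl | rfl⟩ := m.eq_nat_or_neg
  · simpa using key n u (by simpa using h)
  · have hinv : algebraMap R K (u⁻¹ : Rˣ) * algebraMap R K u = 1 := by
      rw [← map_mul, Units.inv_mul, map_one]
    rw [zpow_neg, zpow_natCast, inv_eq_iff_eq_inv, ← eq_inv_of_mul_eq_one_left hinv] at h
    simpa using key n u⁻¹ h

/-- For a perfect field `k` of characteristic `p`, `F = FractionRing (𝕎 k)` and `σ` the
automorphism of `F` induced by the Witt vector Frobenius, the only solution `c ∈ F` of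
`p ^ m * σ c = c` with `m` a nonzero integer is `c = 0`. -/
theorem frobenius_no_nonzero_integral_slope_fixed_vector
    (p : ℕ) [Fact p.Prime] (k : Type*) [Field k] [CharP k p] [PerfectRing k p]
    (σ : FractionRing (WittVector p k) ≃+* FractionRing (WittVector p k))
    (hσ : σ = WittVector.FractionRing.frobenius p k) :
    ∀ m : ℤ, m ≠ 0 → ∀ c : FractionRing (WittVector p k),
      (p : FractionRing (WittVector p k)) ^ m * σ c = c → c = 0 := by
  intro m hm c h
  by_contra hc
  have hirr : Irreducible (p : WittVector p k) := WittVector.irreducible p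
  obtain ⟨n, u, rfl⟩ :=
    IsDiscreteValuationRing.exists_units_eq_smul_zpow_of_irreducible hirr hc
  let v : (WittVector p k)ˣ :=
    Units.map (WittVector.frobeniusEquiv p k : WittVector p k →* WittVector p k) u
  have hσu : σ (algebraMap (WittVector p k) _ u) = algebraMap (WittVector p k) _ v := by
    rw [hσ]
    simp [v, WittVector.FractionRing.frobenius]
  have hp : (p : FractionRing (WittVector p k)) ^ n ≠ 0 :=
    zpow_ne_zero _ (WittVector.FractionRing.p_nonzero p k)
  rw [Units.smul_def, Algebra.smul_def, map_mul, map_zpow₀, hσu, map_natCast, map_natCast,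
    ← mul_assoc] at h
  have hpm := mul_right_cancel₀ hp h
  have hinv : algebraMap _ (FractionRing (WittVector p k)) (v : WittVector p k) *
      algebraMap _ _ ((v⁻¹ : (WittVector p k)ˣ) : WittVector p k) = 1 := by
    rw [← map_mul, Units.mul_inv, map_one]
  refine hm (IsFractionRing.eq_zero_of_zpow_eq_algebraMap_units
    (K := FractionRing (WittVector p k)) hirr.not_isUnit (u := u * v⁻¹) ?_)
  rw [map_natCast, Units.val_mul, map_mul, ← hpm, mul_assoc, hinv, mul_one]
end

section
/- Let p be a prime, k a perfect field of characteristic p, F = FractionRing(𝕎 k), and σ : F ≃+* F the automorphism induced by the Witt vector Frobenius. Let E be a finite-dimensional F-vector space, Φ : E → E an additive map satisfying Φ(c • v) = σ(c) • Φ(v) for all c ∈ F, v ∈ E, and N : E → E an F-linear map satisfying N ∘ Φ = p • (Φ ∘ N). Suppose D ⊆ E is an F-subspace with Φ(D) ⊆ D such that: (i) the quotient E/D is one-dimensional and is spanned by a vector fixed by the map induced by Φ on E/D; and (ii) the only v ∈ D with p • Φ(v) = v is v = 0. Then every e ∈ E with Φ(e) = e satisfies N(e) = 0. -/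
open WittVector

/-- Over the fraction field of the Witt vectors, `p` times the Frobenius has no nonzero fixed
point: the Frobenius preserves the `p`-adic valuation, while multiplication by `p` raises it. -/
theorem WittVector.FractionRing.eq_zero_of_p_mul_frobenius_eq_self
    (p : ℕ) [Fact p.Prime] (k : Type*) [Field k] [CharP k p] [PerfectRing k p]
    (c : FractionRing (WittVector p k))
    (h : (p : FractionRing (WittVector p k)) * WittVector.FractionRing.frobenius p k c = c) :
    c = 0 := by
  obtain ⟨a, b, hb, rfl⟩ := IsFractionRing.div_surjective (A := WittVector p k) c
  have hb0 : b ≠ 0 := nonZeroDivisors.ne_zero hb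
  by_cases ha0 : a = 0
  · simp [ha0]
  exfalso
  have hFb0 : WittVector.frobeniusEquiv p k b ≠ 0 :=
    (map_ne_zero_iff _ (WittVector.frobeniusEquiv p k).injective).2 hb0
  have hmul : (p : WittVector p k) * WittVector.frobeniusEquiv p k a * b =
      a * WittVector.frobeniusEquiv p k b := by
    apply IsFractionRing.injective (WittVector p k) (FractionRing (WittVector p k))
    have hb1 := (map_ne_zero_iff _ (IsFractionRing.injective (WittVector p k)
      (FractionRing (WittVector p k)))).2 hb0
    have hb2 := (map_ne_zero_iff _ (IsFractionRing.injective (WittVector p k)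
      (FractionRing (WittVector p k)))).2 hFb0
    rw [map_div₀, WittVector.FractionRing.frobenius,
      IsFractionRing.ringEquivOfRingEquiv_algebraMap,
      IsFractionRing.ringEquivOfRingEquiv_algebraMap] at h
    rw [← mul_div_assoc, div_eq_div_iff hb2 hb1] at h
    simpa only [map_mul, map_natCast] using h
  obtain ⟨m, u, rfl⟩ := WittVector.exists_eq_pow_p_mul' a ha0
  obtain ⟨n, w, rfl⟩ := WittVector.exists_eq_pow_p_mul' b hb0
  have hp : (p : WittVector p k) ≠ 0 := WittVector.p_nonzero p k
  have hunit : (p : WittVector p k) * (WittVector.frobeniusEquiv p k u * w) =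
      u * WittVector.frobeniusEquiv p k w := by
    apply mul_left_cancel₀ (mul_ne_zero (pow_ne_zero m hp) (pow_ne_zero n hp))
    simp only [map_mul, map_pow, map_natCast] at hmul
    linear_combination hmul
  have hright := u.isUnit.mul (w.isUnit.map (WittVector.frobeniusEquiv p k))
  rw [← hunit] at hright
  exact (WittVector.irreducible p (k := k)).not_isUnit (isUnit_of_mul_isUnit_left hright)

/-- Key linear-algebra step in Theorem 3.1(2): for a perfect field `k` of characteristic
`p`, `F = FractionRing (𝕎 k)`, `σ` induced by the Witt vector Frobenius, `E` a
finite-dimensional `F`-vector space with a `σ`-semilinear additive map `Φ` and an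
`F`-linear monodromy operator `N` with `N ∘ Φ = p • (Φ ∘ N)`: if `D ⊆ E` is a `Φ`-stable
subspace with one-dimensional quotient spanned by a `Φ`-fixed vector, and `D` contains no
nonzero `v` with `p • Φ v = v`, then `N` kills every `Φ`-fixed vector of `E`. -/
theorem monodromy_kills_frobenius_fixed_vectors
    (p : ℕ) [Fact p.Prime] (k : Type*) [Field k] [CharP k p] [PerfectRing k p]
    (σ : FractionRing (WittVector p k) ≃+* FractionRing (WittVector p k))
    (hσ : σ = WittVector.FractionRing.frobenius p k)
    (E : Type*) [AddCommGroup E] [Module (FractionRing (WittVector p k)) E]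
    [FiniteDimensional (FractionRing (WittVector p k)) E]
    (Φ : E →+ E)
    (hΦ : ∀ (c : FractionRing (WittVector p k)) (v : E), Φ (c • v) = σ c • Φ v)
    (N : E →ₗ[FractionRing (WittVector p k)] E)
    (hN : ∀ v : E, N (Φ v) = (p : FractionRing (WittVector p k)) • Φ (N v))
    (D : Submodule (FractionRing (WittVector p k)) E)
    (hD : ∀ v ∈ D, Φ v ∈ D)
    (hquot : Module.finrank (FractionRing (WittVector p k)) (E ⧸ D) = 1)
    (hspan : ∃ v : E, v ∉ D ∧ Φ v - v ∈ D)
    (hslope : ∀ v ∈ D, (p : FractionRing (WittVector p k)) • Φ v = v → v = 0) :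
    ∀ e : E, Φ e = e → N e = 0 := by
  intro e he
  have hfix : (p : FractionRing (WittVector p k)) • Φ (N e) = N e := by rw [← hN, he]
  refine hslope _ ?_ hfix
  obtain ⟨v, hv, hΦv⟩ := hspan
  have hv0 : D.mkQ v ≠ 0 := by simpa using hv
  obtain ⟨c, hc⟩ := (finrank_eq_one_iff_of_nonzero' _ hv0).1 hquot (D.mkQ (N e))
  have hsub : N e - c • v ∈ D := by
    rw [← Submodule.Quotient.mk_eq_zero, Submodule.Quotient.mk_sub, sub_eq_zero]
    exact hc.symm
  have hmem : ((p : FractionRing (WittVector p k)) * σ c - c) • v ∈ D := by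
    have hdiff := D.sub_mem hsub (D.smul_mem (p : FractionRing (WittVector p k)) (hD _ hsub))
    have hcorr := D.smul_mem ((p : FractionRing (WittVector p k)) * σ c) hΦv
    rw [map_sub, hΦ, smul_sub, hfix] at hdiff
    convert D.sub_mem hdiff hcorr using 1
    simp only [sub_smul, mul_smul, smul_sub]
    abel
  have hc0 : c = 0 := by
    apply WittVector.FractionRing.eq_zero_of_p_mul_frobenius_eq_self p k c
    rw [← hσ]
    by_contra hne
    exact hv ((D.smul_mem_iff (sub_ne_zero.2 hne)).1 hmem)
  simpa [hc0] using hsub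
end

section
/- Let L/K be an algebraic extension of fields, let γ be a K-algebra automorphism of L, and let c ∈ K be an element that is not a root of unity (i.e. c^n ≠ 1 for every integer n ≥ 1). Then the map L → L sending x to c·γ(x) − x is a bijection. -/
/-- Every element of an algebraic extension is a periodic point of any automorphism. -/
theorem AlgEquiv.mem_periodicPts_of_isAlgebraic {K L : Type*} [Field K] [Field L] [Algebra K L]
    (γ : L ≃ₐ[K] L) {x : L} (hx : IsAlgebraic K x) : x ∈ Function.periodicPts γ := by
  have hmaps : Set.MapsTo γ ((minpoly K x).rootSet L) ((minpoly K x).rootSet L) :=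
    Polynomial.rootSet_mapsTo (γ : L →ₐ[K] L)
  have hmem : x ∈ (minpoly K x).rootSet L :=
    (Polynomial.mem_rootSet_of_ne (minpoly.ne_zero hx.isIntegral)).2 (minpoly.aeval K x)
  have : Finite ((minpoly K x).rootSet L) := Polynomial.rootSet_finite _ _
  obtain ⟨n, hn, h⟩ := Function.mem_periodicPts.1
    ((hmaps.restrict_inj.2 γ.injective.injOn).mem_periodicPts ⟨x, hmem⟩)
  refine Function.mem_periodicPts.2 ⟨n, hn, ?_⟩
  have h' := congrArg Subtype.val h
  rwa [hmaps.iterate_restrict] at h'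

/-- If every vector is scaled by some power of `T`, by a factor different
from `1`, then `T - 1` is bijective. -/
theorem Module.End.sub_one_bijective_of_pow_apply_eq_smul {K V : Type*} [Field K]
    [AddCommGroup V] [Module K V] (T : Module.End K V)
    (hT : ∀ x, ∃ n : ℕ, ∃ a : K, a ≠ 1 ∧ (T ^ n) x = a • x) :
    Function.Bijective (T - 1 : Module.End K V) := by
  refine ⟨(injective_iff_map_eq_zero _).2 fun x hx => ?_, fun y => ?_⟩
  · obtain ⟨n, a, ha, h⟩ := hT x
    have hgeom := LinearMap.congr_fun (geom_sum_mul T n) x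
    rw [Module.End.mul_apply, hx, map_zero, LinearMap.sub_apply, h, Module.End.one_apply] at hgeom
    have hzero : (a - 1) • x = 0 := by rw [sub_smul, one_smul, ← hgeom]
    exact (smul_eq_zero.1 hzero).resolve_left (sub_ne_zero.2 ha)
  · obtain ⟨n, a, ha, h⟩ := hT y
    have hgeom := LinearMap.congr_fun (mul_geom_sum T n) y
    rw [Module.End.mul_apply, LinearMap.sub_apply (T ^ n), h, Module.End.one_apply] at hgeom
    refine ⟨(a - 1)⁻¹ • (∑ i ∈ Finset.range n, T ^ i) y, ?_⟩
    rw [map_smul, hgeom, inv_smul_eq_iff₀ (sub_ne_zero.2 ha), sub_smul, one_smul]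

/-- Twisted-automorphism lemma: if `L/K` is an algebraic extension of fields, `γ` a
`K`-algebra automorphism of `L`, and `c ∈ K` is not a root of unity, then the map
`x ↦ c • γ x - x` is a bijection of `L`. -/
theorem twisted_automorphism_sub_one_bijective
    (K L : Type*) [Field K] [Field L] [Algebra K L] [Algebra.IsAlgebraic K L]
    (γ : L ≃ₐ[K] L) (c : K) (hc : ∀ n : ℕ, 1 ≤ n → c ^ n ≠ 1) :
    Function.Bijective (fun x : L => c • γ x - x) := by
  refine Module.End.sub_one_bijective_of_pow_apply_eq_smul (c • γ.toLinearMap) fun x => ?_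
  obtain ⟨n, hn, h⟩ := Function.mem_periodicPts.1
    (γ.mem_periodicPts_of_isAlgebraic (Algebra.IsAlgebraic.isAlgebraic x))
  refine ⟨n, c ^ n, hc n hn, ?_⟩
  rw [smul_pow, LinearMap.smul_apply, Module.End.pow_apply]
  exact congrArg (c ^ n • ·) h
end
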